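/- There is a uniform constant C such that for all scalar u, v ∈ C₀^∞(ℝ×ℝ³) and all t ≥ 0: ‖⟨t+r⟩ u(t,·) v(t,·)‖_{L²(ℝ³)} ≤ C‖u(t,·)‖_{L²(ℝ³)} · ⟨t⟩ ‖v(t,·)‖_{L^∞(ℝ³)} + C‖u(t,·)‖_{L²(ℝ³)} · Σ_{|α|+|β|≤2} ‖Ω^α ∂_x^β v(t,·)‖_{L²(ℝ³)}, where Ω^α denotes a composition of |α| of the rotation fields and ∂_x^β a composition of |β| spatial derivatives. -/

import Mathlib

open MeasureTheory Real Finset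

noncomputable section

/-- Points of space `ℝ³`. -/
abbrev Sp : Type := Fin 3 → ℝ

/-- Spatial partial derivative `∂_j`. -/
def pd3 (j : Fin 3) (w : Sp → ℝ) : Sp → ℝ := fun x => fderiv ℝ w x (Pi.single j 1)

/-- The three Euclidean rotation fields `Ω_{ij} = x_i∂_j - x_j∂_i`, `1 ≤ i < j ≤ 3`. -/
def Rot3 : Fin 3 → (Sp → ℝ) → Sp → ℝ :=
  ![fun w x => x 0 * pd3 1 w x - x 1 * pd3 0 w x,
    fun w x => x 0 * pd3 2 w x - x 2 * pd3 0 w x,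
    fun w x => x 1 * pd3 2 w x - x 2 * pd3 1 w x]

/-- `Ω^α`: a composition of `m` rotation fields. -/
def Rot3Comp : ∀ {m : ℕ}, (Fin m → Fin 3) → (Sp → ℝ) → Sp → ℝ
  | 0, _, w => w
  | _ + 1, α, w => Rot3 (α 0) (Rot3Comp (fun i => α i.succ) w)

/-- `∂_x^β`: a composition of `m` spatial derivatives. -/
def Pd3Comp : ∀ {m : ℕ}, (Fin m → Fin 3) → (Sp → ℝ) → Sp → ℝ
  | 0, _, w => w
  | _ + 1, β, w => pd3 (β 0) (Pd3Comp (fun i => β i.succ) w)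

/-- Euclidean length `r = |x|` of a spatial point. -/
def rad (x : Sp) : ℝ := Real.sqrt (∑ i, (x i) ^ 2)

/-- Japanese bracket `⟨z⟩ = (1+z²)^{1/2}`. -/
def jb (z : ℝ) : ℝ := Real.sqrt (1 + z ^ 2)

/-- Points of space-time `ℝ×ℝ³`. -/
abbrev Pt : Type := Fin 4 → ℝ


def Nv (e : Sp) (s : ℝ) (y : Sp) : Sp := fun i => e i + s * y i
def qv (e : Sp) (s : ℝ) (y : Sp) : ℝ := Nv e s y 0 ^ 2 + Nv e s y 1 ^ 2 + Nv e s y 2 ^ 2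
def gam (c : ℝ) (e : Sp) (s : ℝ) (y : Sp) : Sp :=
  fun i => (1 + c / √(qv e s y)) * Nv e s y i

def gamL (c : ℝ) (e : Sp) (s : ℝ) (y : Sp) : Sp →L[ℝ] Sp :=
  s • ((1 + c / √(qv e s y)) • ContinuousLinearMap.id ℝ Sp -
    (c / √(qv e s y) ^ 3) • ContinuousLinearMap.smulRight
      (∑ j, Nv e s y j • (ContinuousLinearMap.proj j : Sp →L[ℝ] ℝ)) (Nv e s y))

lemma gamL_det (c : ℝ) (e : Sp) (s : ℝ) (y : Sp) (hq : 0 < qv e s y) :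
    (gamL c e s y).det = s ^ 3 * (1 + c / √(qv e s y)) ^ 2 := by
  have h0 : 0 < √(qv e s y) := Real.sqrt_pos.2 hq
  have h1 : √(qv e s y) ^ 2 = qv e s y := Real.sq_sqrt hq.le
  rw [ContinuousLinearMap.det, ← LinearMap.det_toMatrix', Matrix.det_fin_three]
  simp only [LinearMap.toMatrix'_apply, gamL]
  simp [Fin.sum_univ_three]
  have h2 : √(qv e s y) ^ 2 = Nv e s y 0 ^ 2 + Nv e s y 1 ^ 2 + Nv e s y 2 ^ 2 := h1
  clear h1
  generalize √(qv e s y) = k at *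
  field_simp
  linear_combination (s^3 * c*(k + c)^2 * k ^ 4) * h2

lemma gam_hasFDerivAt (c : ℝ) (e : Sp) (s : ℝ) (y : Sp) (hq : 0 < qv e s y) :
    HasFDerivAt (gam c e s) (gamL c e s y) y := by
  have h0 : 0 < √(qv e s y) := Real.sqrt_pos.2 hq
  have h1 : √(qv e s y) ^ 2 = qv e s y := Real.sq_sqrt hq.le
  have hN : ∀ i, HasFDerivAt (fun y => Nv e s y i) (s • (ContinuousLinearMap.proj i : Sp →L[ℝ] ℝ)) y := by
    intro i
    exact ((ContinuousLinearMap.proj (R := ℝ) (φ := fun _ : Fin 3 => ℝ) i).hasFDerivAt.const_mul s).const_add _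
  have hqd := (((hN 0).pow 2).add ((hN 1).pow 2)).add ((hN 2).pow 2)
  have hsq := hqd.sqrt (x := y) (by exact hq.ne')
  have hinv := (hasDerivAt_inv (x := √(qv e s y)) h0.ne').comp_hasFDerivAt y hsq
  rw [hasFDerivAt_pi']
  intro i
  have := ((hinv.const_mul c).const_add 1).mul (hN i)
  refine HasFDerivAt.congr_fderiv (f := fun y => gam c e s y i) this ?_
  ext z
  have hs : Nv e s y 0 ^ 2 + Nv e s y 1 ^ 2 + Nv e s y 2 ^ 2 = qv e s y := rfl
  simp [gamL, Fin.sum_univ_three, hs]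
  generalize √(qv e s y) = k at *
  field_simp
  ring

lemma gam_injOn (c : ℝ) (hc : 0 ≤ c) (e : Sp) (s : ℝ) (hs : s ≠ 0) :
    Set.InjOn (gam c e s) {y | 0 < qv e s y} := by
  intro y hy z hz h
  simp only [Set.mem_ofPred_eq] at hy hz
  have a0 : 0 < √(qv e s y) := Real.sqrt_pos.2 hy
  have a1 : √(qv e s y) ^ 2 = qv e s y := Real.sq_sqrt hy.le
  have b0 : 0 < √(qv e s z) := Real.sqrt_pos.2 hz
  have b1 : √(qv e s z) ^ 2 = qv e s z := Real.sq_sqrt hz.le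
  have hi : ∀ i, (1 + c / √(qv e s y)) * Nv e s y i = (1 + c / √(qv e s z)) * Nv e s z i :=
    fun i => congrFun h i
  have key : (1 + c / √(qv e s y)) ^ 2 * qv e s y = (1 + c / √(qv e s z)) ^ 2 * qv e s z := by
    have := fun i => congrArg (· ^ 2) (hi i)
    simp only [mul_pow] at this
    simp only [qv] at this ⊢
    linear_combination this 0 + this 1 + this 2
  have k2 : (√(qv e s y) + c) ^ 2 = (√(qv e s z) + c) ^ 2 := by
    have e1 : (1 + c / √(qv e s y)) ^ 2 * √(qv e s y) ^ 2 = (√(qv e s y) + c) ^ 2 := by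
      field_simp
    have e2 : (1 + c / √(qv e s z)) ^ 2 * √(qv e s z) ^ 2 = (√(qv e s z) + c) ^ 2 := by
      field_simp
    rw [← e1, ← e2, a1, b1, key]
  have k3 : √(qv e s y) = √(qv e s z) := by
    have := (pow_left_inj₀ (by positivity) (by positivity) two_ne_zero).1 k2
    linarith
  ext i
  have := hi i
  rw [k3] at this
  have hp : (1 + c / √(qv e s z)) ≠ 0 := by positivity
  have := mul_left_cancel₀ hp this
  simp only [Nv] at this
  exact mul_left_cancel₀ hs (by linarith)

def al (e y : Sp) (k : Fin 3) (s : ℝ) : ℝ := 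
  (y 0 * Nv e s y 0 + y 1 * Nv e s y 1 + y 2 * Nv e s y 2) * Nv e s y k / qv e s y

def cc (e y : Sp) : Fin 3 → ℝ :=
  ![e 0 * y 1 - e 1 * y 0, e 0 * y 2 - e 2 * y 0, e 1 * y 2 - e 2 * y 1]

def be (e y : Sp) (k : Fin 3) (s : ℝ) : ℝ := cc e y k / qv e s y

lemma fderiv_eq_pd (w : Sp → ℝ) (p z : Sp) : fderiv ℝ w p z = ∑ k, z k * pd3 k w p := by
  conv_lhs => rw [show z = ∑ k, z k • (Pi.single k 1 : Sp) by
    ext i; simp [Finset.sum_apply, Pi.single_apply]]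
  simp [pd3]

lemma hasDerivAt_N (e y : Sp) (s : ℝ) (k : Fin 3) : HasDerivAt (fun s => Nv e s y k) (y k) s := by
  have := ((hasDerivAt_id s).mul_const (y k)).const_add (e k)
  simpa [Nv] using this

lemma hasDerivAt_q (e y : Sp) (s : ℝ) : HasDerivAt (fun s => qv e s y)
    (2 * (y 0 * Nv e s y 0 + y 1 * Nv e s y 1 + y 2 * Nv e s y 2)) s := by
  have := (((hasDerivAt_N e y s 0).pow 2).add ((hasDerivAt_N e y s 1).pow 2)).add ((hasDerivAt_N e y s 2).pow 2)
  refine HasDerivAt.congr_deriv (f := fun s => qv e s y) this ?_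
  push_cast
  ring

lemma hasDerivAt_gam (c : ℝ) (e y : Sp) (s : ℝ) (hq : 0 < qv e s y) :
    HasDerivAt (fun s => gam c e s y) (fun k => (1 + c / √(qv e s y)) * y k -
      c * (y 0 * Nv e s y 0 + y 1 * Nv e s y 1 + y 2 * Nv e s y 2) / √(qv e s y) ^ 3 * Nv e s y k) s := by
  have h0 : 0 < √(qv e s y) := Real.sqrt_pos.2 hq
  have h1 : √(qv e s y) ^ 2 = qv e s y := Real.sq_sqrt hq.le
  rw [hasDerivAt_pi]
  intro k
  have := ((((hasDerivAt_q e y s).sqrt hq.ne').inv h0.ne').const_mul c).const_add 1 |>.mul (hasDerivAt_N e y s k)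
  refine HasDerivAt.congr_deriv (f := fun s => gam c e s y k) this ?_
  simp only [Pi.inv_apply]
  generalize √(qv e s y) = r at *
  field_simp
  ring

lemma hasDerivAt_comp (c : ℝ) (e y : Sp) (s : ℝ) (hq : 0 < qv e s y) (w : Sp → ℝ)
    (hw : Differentiable ℝ w) :
    HasDerivAt (fun s => w (gam c e s y)) (∑ k, (al e y k s * pd3 k w (gam c e s y) +
      be e y k s * Rot3 k w (gam c e s y))) s := by
  have h0 : 0 < √(qv e s y) := Real.sqrt_pos.2 hq
  have h1 : √(qv e s y) ^ 2 = qv e s y := Real.sq_sqrt hq.le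
  have := (hw (gam c e s y)).hasFDerivAt.comp_hasDerivAt s (hasDerivAt_gam c e y s hq)
  refine HasDerivAt.congr_deriv this ?_
  rw [fderiv_eq_pd]
  have g : ∀ k, gam c e s y k = (1 + c / √(qv e s y)) * Nv e s y k := fun k => rfl
  simp only [Fin.sum_univ_three, al, be, cc, Rot3, Matrix.cons_val_zero, Matrix.cons_val_one, Matrix.cons_val, g]
  have hcc : ∀ i j, e i * y j - e j * y i = Nv e s y i * y j - Nv e s y j * y i := by
    intro i j; simp [Nv]; ring
  simp only [hcc]
  have h2 : √(qv e s y) ^ 2 = Nv e s y 0 ^ 2 + Nv e s y 1 ^ 2 + Nv e s y 2 ^ 2 := h1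
  clear this g hcc
  generalize √(qv e s y) = r at *
  rw [← h1]
  generalize pd3 0 w _ = p0 
  generalize pd3 1 w _ = p1
  generalize pd3 2 w _ = p2
  have hr : r ≠ 0 := h0.ne'
  generalize Nv e s y = N at *
  field_simp
  linear_combination (y 0 * p0 + y 1 * p1 + y 2 * p2) * (r+c) * h2

lemma fin3_cases (P : Fin 3 → Prop) (h0 : P 0) (h1 : P 1) (h2 : P 2) : ∀ k, P k := by
  intro k; fin_cases k <;> assumption

def SC (w : Sp → ℝ) : Prop := ContDiff ℝ (⊤ : ℕ∞) w ∧ HasCompactSupport w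

lemma SC.pd {w : Sp → ℝ} (h : SC w) (j : Fin 3) : SC (pd3 j w) := by
  refine ⟨?_, ?_⟩
  · exact (h.1.fderiv_right (m := (⊤ : ℕ∞)) (by simp)).clm_apply contDiff_const
  · exact h.2.fderiv_apply (𝕜 := ℝ) _

lemma SC.mulsub {w z : Sp → ℝ} (hw : SC w) (hz : SC z) (i j : Fin 3) :
    SC (fun x => x i * w x - x j * z x) := by
  refine ⟨?_, ?_⟩
  · exact ((contDiff_apply ℝ ℝ i).mul hw.1).sub ((contDiff_apply ℝ ℝ j).mul hz.1)
  · exact (hw.2.mul_left (f := fun x : Sp => x i)).sub (hz.2.mul_left (f := fun x : Sp => x j))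

lemma SC.rot {w : Sp → ℝ} (h : SC w) (j : Fin 3) : SC (Rot3 j w) := by
  revert j
  refine fin3_cases _ ?_ ?_ ?_
  · exact (h.pd 1).mulsub (h.pd 0) 0 1
  · exact (h.pd 2).mulsub (h.pd 0) 0 2
  · exact (h.pd 2).mulsub (h.pd 1) 1 2

lemma SC.rotComp {w : Sp → ℝ} (h : SC w) : ∀ {m : ℕ} (α : Fin m → Fin 3), SC (Rot3Comp α w)
  | 0, _ => h
  | _ + 1, α => (h.rotComp (fun i => α i.succ)).rot (α 0)

lemma SC.pdComp {w : Sp → ℝ} (h : SC w) : ∀ {m : ℕ} (α : Fin m → Fin 3), SC (Pd3Comp α w)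
  | 0, _ => h
  | _ + 1, α => (h.pdComp (fun i => α i.succ)).pd (α 0)

lemma SC.diff {w : Sp → ℝ} (h : SC w) : Differentiable ℝ w := h.1.differentiable (by simp)
lemma SC.cont {w : Sp → ℝ} (h : SC w) : Continuous w := h.1.continuous

lemma pd_comm {w : Sp → ℝ} (h : SC w) (i j : Fin 3) (p : Sp) :
    pd3 i (pd3 j w) p = pd3 j (pd3 i w) p := by
  have hs : IsSymmSndFDerivAt ℝ w p :=
    h.1.contDiffAt.isSymmSndFDerivAt (by simp only [minSmoothness_of_isRCLikeNormedField]; exact (WithTop.coe_le_coe.2 le_top : ((2 : ℕ∞) : WithTop ℕ∞) ≤ _))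
  have hd : DifferentiableAt ℝ (fderiv ℝ w) p :=
    ((h.1.fderiv_right (m := (⊤ : ℕ∞)) (by simp)).differentiable (by simp)) p
  have e : ∀ i j, pd3 i (pd3 j w) p = fderiv ℝ (fderiv ℝ w) p (Pi.single i 1) (Pi.single j 1) := by
    intro i j
    unfold pd3
    rw [fderiv_clm_apply hd (by fun_prop)]
    simp
  rw [e, e]
  exact hs _ _

lemma pd_mulsub {w z : Sp → ℝ} (hw : SC w) (hz : SC z) (i j l : Fin 3) (p : Sp) :
    pd3 l (fun x => x i * w x - x j * z x) p =
      (p i * pd3 l w p - p j * pd3 l z p) + ((Pi.single l 1 : Sp) i * w p - (Pi.single l 1 : Sp) j * z p) := by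
  have h1 := (hasFDerivAt_apply (𝕜 := ℝ) i p).mul (hw.diff p).hasFDerivAt
  have h2 := (hasFDerivAt_apply (𝕜 := ℝ) j p).mul (hz.diff p).hasFDerivAt
  have := (h1.sub h2).fderiv
  unfold pd3
  erw [this]
  simp
  ring

lemma pd_rot_bound {w : Sp → ℝ} (h : SC w) (l K : Fin 3) (p : Sp) {G : ℝ}
    (h1 : ∀ k, |pd3 k w p| ≤ G) (h2 : ∀ k K, |Rot3 K (pd3 k w) p| ≤ G) :
    |pd3 l (Rot3 K w) p| ≤ 3 * G := by
  have hG : 0 ≤ G := (abs_nonneg _).trans (h1 0)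
  have gen : ∀ i j : Fin 3, |p i * pd3 j (pd3 l w) p - p j * pd3 i (pd3 l w) p| ≤ G →
      |pd3 l (fun x => x i * pd3 j w x - x j * pd3 i w x) p| ≤ 3 * G := by
    intro i j hij
    rw [pd_mulsub (h.pd j) (h.pd i), pd_comm h l j, pd_comm h l i]
    have a : ∀ k m, |(Pi.single l 1 : Sp) k * pd3 m w p| ≤ G := by
      intro k m
      rw [Pi.single_apply]
      split_ifs
      · simpa using h1 m
      · simpa using hG
    have a1 := abs_le.1 (a i j)
    have a2 := abs_le.1 (a j i)
    have a3 := abs_le.1 hij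
    rw [abs_le]
    constructor <;> linarith [a1.1, a1.2, a2.1, a2.2, a3.1, a3.2]
  have h3 := h2 l K
  revert h3
  revert K
  refine fin3_cases _ ?_ ?_ ?_
  · exact gen 0 1
  · exact gen 0 2
  · exact gen 1 2

/-- The sum of the absolute values of all the derivatives. -/
def GG (w : Sp → ℝ) (p : Sp) : ℝ :=
  ∑ m ∈ Finset.range 3, ∑ n ∈ Finset.range (3 - m),
    ∑ α : Fin m → Fin 3, ∑ β : Fin n → Fin 3, |Rot3Comp α (Pd3Comp β w) p|

lemma le_GG (w : Sp → ℝ) (p : Sp) {m n : ℕ} (h : m + n ≤ 2) (α : Fin m → Fin 3) (β : Fin n → Fin 3) :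
    |Rot3Comp α (Pd3Comp β w) p| ≤ GG w p := by
  have h1 : |Rot3Comp α (Pd3Comp β w) p| ≤ ∑ β : Fin n → Fin 3, |Rot3Comp α (Pd3Comp β w) p| :=
    Finset.single_le_sum (f := fun β : Fin n → Fin 3 => |Rot3Comp α (Pd3Comp β w) p|)
      (fun _ _ => abs_nonneg _) (Finset.mem_univ β)
  refine h1.trans ?_
  have h2 := Finset.single_le_sum (f := fun α : Fin m → Fin 3 => ∑ β : Fin n → Fin 3, |Rot3Comp α (Pd3Comp β w) p|)
      (fun _ _ => Finset.sum_nonneg fun _ _ => abs_nonneg _) (Finset.mem_univ α)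
  refine h2.trans ?_
  have h3 := Finset.single_le_sum (s := Finset.range (3 - m)) (a := n) (f := fun n => ∑ α : Fin m → Fin 3, ∑ β : Fin n → Fin 3, |Rot3Comp α (Pd3Comp β w) p|)
      (fun _ _ => Finset.sum_nonneg fun _ _ => Finset.sum_nonneg fun _ _ => abs_nonneg _) (Finset.mem_range.2 (by omega))
  refine h3.trans ?_
  exact Finset.single_le_sum (s := Finset.range 3) (a := m) (f := fun m => ∑ n ∈ Finset.range (3 - m),
    ∑ α : Fin m → Fin 3, ∑ β : Fin n → Fin 3, |Rot3Comp α (Pd3Comp β w) p|)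
      (fun _ _ => Finset.sum_nonneg fun _ _ => Finset.sum_nonneg fun _ _ => Finset.sum_nonneg fun _ _ => abs_nonneg _) (Finset.mem_range.2 (by omega))

lemma GG_0 (w p) : |w p| ≤ GG w p := le_GG w p (m := 0) (n := 0) (by norm_num) ![] ![]
lemma GG_p (w p k) : |pd3 k w p| ≤ GG w p := le_GG w p (m := 0) (n := 1) (by norm_num) ![] ![k]
lemma GG_r (w p k) : |Rot3 k w p| ≤ GG w p := le_GG w p (m := 1) (n := 0) (by norm_num) ![k] ![]
lemma GG_pp (w p k l) : |pd3 k (pd3 l w) p| ≤ GG w p := le_GG w p (m := 0) (n := 2) (by norm_num) ![] ![k,l]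
lemma GG_rp (w p k l) : |Rot3 k (pd3 l w) p| ≤ GG w p := le_GG w p (m := 1) (n := 1) (by norm_num) ![k] ![l]
lemma GG_rr (w p k l) : |Rot3 k (Rot3 l w) p| ≤ GG w p := le_GG w p (m := 2) (n := 0) (by norm_num) ![k,l] ![]

lemma GG_cont {w : Sp → ℝ} (h : SC w) : Continuous (GG w) := by
  unfold GG
  refine continuous_finsetSum _ fun m _ => continuous_finsetSum _ fun n _ => continuous_finsetSum _ fun α _ =>
    continuous_finsetSum _ fun β _ => ?_
  exact ((h.pdComp β).rotComp α).cont.abs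

def dl (e y : Sp) (s : ℝ) : ℝ := y 0 * Nv e s y 0 + y 1 * Nv e s y 1 + y 2 * Nv e s y 2
def al' (e y : Sp) (k : Fin 3) (s : ℝ) : ℝ :=
  (((y 0 ^ 2 + y 1 ^ 2 + y 2 ^ 2) * Nv e s y k + dl e y s * y k) * qv e s y -
    dl e y s * Nv e s y k * (2 * dl e y s)) / qv e s y ^ 2
def be' (e y : Sp) (k : Fin 3) (s : ℝ) : ℝ := -(cc e y k * (2 * dl e y s)) / qv e s y ^ 2

lemma hasDerivAt_al (e y : Sp) (k : Fin 3) (s : ℝ) (hq : 0 < qv e s y) :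
    HasDerivAt (al e y k) (al' e y k s) s := by
  have := (((((hasDerivAt_N e y s 0).const_mul (y 0)).add ((hasDerivAt_N e y s 1).const_mul (y 1))).add
    ((hasDerivAt_N e y s 2).const_mul (y 2))).mul (hasDerivAt_N e y s k)).div (hasDerivAt_q e y s) hq.ne'
  refine HasDerivAt.congr_deriv (f := al e y k) this ?_
  simp only [al', dl, Pi.mul_apply, Pi.add_apply]
  ring

lemma hasDerivAt_be (e y : Sp) (k : Fin 3) (s : ℝ) (hq : 0 < qv e s y) :
    HasDerivAt (be e y k) (be' e y k s) s := by
  have := (hasDerivAt_const s (cc e y k)).div (hasDerivAt_q e y s) hq.ne'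
  refine HasDerivAt.congr_deriv (f := be e y k) this ?_
  simp only [be', dl]
  ring

structure Good (e y : Sp) (s : ℝ) : Prop where
  he : e 0 ^ 2 + e 1 ^ 2 + e 2 ^ 2 = 1
  hy : ∀ i, |y i| ≤ 1 / 8
  s0 : 0 ≤ s
  s1 : s ≤ 1

lemma Good.e_le {e y : Sp} {s : ℝ} (g : Good e y s) : ∀ i, |e i| ≤ 1 := by
  have := g.he
  refine fin3_cases _ ?_ ?_ ?_ <;> rw [← sq_le_one_iff_abs_le_one] <;>
  nlinarith [sq_nonneg (e 0), sq_nonneg (e 1), sq_nonneg (e 2)]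

lemma mul_bd {a b A B : ℝ} (ha : |a| ≤ A) (hb : |b| ≤ B) : |a * b| ≤ A * B := by
  rw [abs_mul]
  exact mul_le_mul ha hb (abs_nonneg _) ((abs_nonneg _).trans ha)

lemma add_bd {a b A B : ℝ} (ha : |a| ≤ A) (hb : |b| ≤ B) : |a + b| ≤ A + B :=
  (abs_add_le a b).trans (add_le_add ha hb)

lemma sub_bd {a b A B : ℝ} (ha : |a| ≤ A) (hb : |b| ≤ B) : |a - b| ≤ A + B :=
  (abs_sub a b).trans (add_le_add ha hb)

lemma Good.N_le {e y : Sp} {s : ℝ} (g : Good e y s) (i) : |Nv e s y i| ≤ 9 / 8 := by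
  have := add_bd (g.e_le i) (mul_bd (abs_le.2 ⟨by linarith [g.s0], g.s1⟩) (g.hy i))
  simp only [Nv]
  linarith

lemma Good.q_ge {e y : Sp} {s : ℝ} (g : Good e y s) : 1 / 4 ≤ qv e s y := by
  have h : ∀ i, |s * (e i * y i)| ≤ 1 * (1 * (1/8)) := fun i =>
    mul_bd (abs_le.2 ⟨by linarith [g.s0], g.s1⟩) (mul_bd (g.e_le i) (g.hy i))
  have h0 := (abs_le.1 (h 0)).1
  have h1 := (abs_le.1 (h 1)).1
  have h2 := (abs_le.1 (h 2)).1
  have := g.he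
  simp only [qv, Nv]
  nlinarith [sq_nonneg (s * y 0), sq_nonneg (s * y 1), sq_nonneg (s * y 2)]

lemma Good.q_pos {e y : Sp} {s : ℝ} (g : Good e y s) : 0 < qv e s y := by linarith [g.q_ge]

lemma Good.q_le {e y : Sp} {s : ℝ} (g : Good e y s) : qv e s y ≤ 4 := by
  have h : ∀ i, Nv e s y i ^ 2 ≤ (9/8) ^ 2 := fun i => sq_le_sq' (abs_le.1 (g.N_le i)).1 (abs_le.1 (g.N_le i)).2
  have := h 0
  have := h 1
  have := h 2
  simp only [qv]
  linarith

lemma Good.dl_le {e y : Sp} {s : ℝ} (g : Good e y s) : |dl e y s| ≤ 1 / 2 := by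
  have := add_bd (add_bd (mul_bd (g.hy 0) (g.N_le 0)) (mul_bd (g.hy 1) (g.N_le 1))) (mul_bd (g.hy 2) (g.N_le 2))
  simp only [dl]
  linarith

lemma Good.cc_le {e y : Sp} {s : ℝ} (g : Good e y s) : ∀ k, |cc e y k| ≤ 1 / 4 := by
  have h : ∀ i j, |e i * y j - e j * y i| ≤ 1 / 4 := fun i j => by
    have := sub_bd (mul_bd (g.e_le i) (g.hy j)) (mul_bd (g.e_le j) (g.hy i))
    linarith
  exact fin3_cases _ (h 0 1) (h 0 2) (h 1 2)

lemma div_bd {a b A c : ℝ} (ha : |a| ≤ A) (hc : 0 < c) (hb : c ≤ b) : |a / b| ≤ A / c := by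
  rw [abs_div, abs_of_pos (hc.trans_le hb)]
  exact div_le_div₀ ((abs_nonneg _).trans ha) ha hc hb

lemma Good.al_le {e y : Sp} {s : ℝ} (g : Good e y s) (k) : |al e y k s| ≤ 10 := by
  have := div_bd (mul_bd g.dl_le (g.N_le k)) (by norm_num) g.q_ge
  simp only [al, dl] at *
  linarith

lemma Good.be_le {e y : Sp} {s : ℝ} (g : Good e y s) (k) : |be e y k s| ≤ 10 := by
  have := div_bd (g.cc_le k) (by norm_num) g.q_ge
  simp only [be] at *
  linarith

lemma Good.q2_ge {e y : Sp} {s : ℝ} (g : Good e y s) : 1 / 16 ≤ qv e s y ^ 2 := by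
  nlinarith [g.q_ge]

lemma Good.be'_le {e y : Sp} {s : ℝ} (g : Good e y s) (k) : |be' e y k s| ≤ 100 := by
  have h2 : |(2:ℝ)| ≤ 2 := by norm_num
  have := div_bd (mul_bd (g.cc_le k) (mul_bd h2 g.dl_le)) (by norm_num) g.q2_ge
  simp only [be', neg_div, abs_neg] at *
  linarith

lemma Good.al'_le {e y : Sp} {s : ℝ} (g : Good e y s) (k) : |al' e y k s| ≤ 100 := by
  have h2 : |(2:ℝ)| ≤ 2 := by norm_num
  have hq : |qv e s y| ≤ 4 := by rw [abs_of_pos g.q_pos]; exact g.q_le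
  have hy2 : ∀ i, |y i ^ 2| ≤ 1 / 8 * (1 / 8) := fun i => by rw [sq]; exact mul_bd (g.hy i) (g.hy i)
  have := div_bd (sub_bd (mul_bd (add_bd (mul_bd (add_bd (add_bd (hy2 0) (hy2 1)) (hy2 2)) (g.N_le k))
    (mul_bd g.dl_le (g.hy k))) hq) (mul_bd (mul_bd g.dl_le (g.N_le k)) (mul_bd h2 g.dl_le))) (by norm_num) g.q2_ge
  simp only [al'] at *
  refine this.trans ?_
  norm_num

def DD (c : ℝ) (e y : Sp) (w : Sp → ℝ) (s : ℝ) : ℝ :=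
  ∑ k, (al e y k s * pd3 k w (gam c e s y) + be e y k s * Rot3 k w (gam c e s y))

def DD2 (c : ℝ) (e y : Sp) (w : Sp → ℝ) (s : ℝ) : ℝ :=
  ∑ k, ((al' e y k s * pd3 k w (gam c e s y) + al e y k s * DD c e y (pd3 k w) s) +
    (be' e y k s * Rot3 k w (gam c e s y) + be e y k s * DD c e y (Rot3 k w) s))

lemma hasDerivAt_DD (c : ℝ) {e y : Sp} {s : ℝ} (g : Good e y s) {w : Sp → ℝ} (hw : SC w) :
    HasDerivAt (DD c e y w) (DD2 c e y w s) s := by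
  unfold DD DD2
  refine HasDerivAt.fun_sum fun k _ => ?_
  exact ((hasDerivAt_al e y k s g.q_pos).mul (hasDerivAt_comp c e y s g.q_pos _ (hw.pd k).diff)).add
    ((hasDerivAt_be e y k s g.q_pos).mul (hasDerivAt_comp c e y s g.q_pos _ (hw.rot k).diff))

lemma DD_bound (c : ℝ) {e y : Sp} {s : ℝ} (g : Good e y s) {w : Sp → ℝ} {A B : ℝ}
    (h1 : ∀ k, |pd3 k w (gam c e s y)| ≤ A) (h2 : ∀ k, |Rot3 k w (gam c e s y)| ≤ B) :
    |DD c e y w s| ≤ 30 * (A + B) := by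
  unfold DD
  have : ∀ k, |al e y k s * pd3 k w (gam c e s y) + be e y k s * Rot3 k w (gam c e s y)| ≤ 10 * A + 10 * B :=
    fun k => add_bd (mul_bd (g.al_le k) (h1 k)) (mul_bd (g.be_le k) (h2 k))
  rw [Fin.sum_univ_three]
  have := add_bd (add_bd (this 0) (this 1)) (this 2)
  linarith

lemma DD2_bound (c : ℝ) {e y : Sp} {s : ℝ} (g : Good e y s) {w : Sp → ℝ} (hw : SC w) :
    |DD2 c e y w s| ≤ 10000 * GG w (gam c e s y) := by
  unfold DD2
  set p := gam c e s y
  have hG : 0 ≤ GG w p := (abs_nonneg _).trans (GG_0 w p)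
  have a1 := fun k => DD_bound c g (w := pd3 k w) (fun l => GG_pp w p l k) (fun l => GG_rp w p l k)
  have a2 := fun k => DD_bound c g (w := Rot3 k w)
    (fun l => pd_rot_bound hw l k p (GG_p w p) (fun k K => GG_rp w p K k)) (fun l => GG_rr w p l k)
  have := fun k => add_bd (add_bd (mul_bd (g.al'_le k) (GG_p w p k)) (mul_bd (g.al_le k) (a1 k)))
    (add_bd (mul_bd (g.be'_le k) (GG_r w p k)) (mul_bd (g.be_le k) (a2 k)))
  rw [Fin.sum_univ_three]
  have := add_bd (add_bd (this 0) (this 1)) (this 2)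
  linarith

def YY : Set Sp := {y | ∀ i, |y i| ≤ 1 / 8}

lemma YY_eq : YY = Metric.closedBall (0 : Sp) (1 / 8) := by
  ext y
  simp only [YY, Set.mem_ofPred_eq, mem_closedBall_zero_iff]
  rw [pi_norm_le_iff_of_nonneg (by norm_num)]
  rfl

lemma YY_meas : MeasurableSet YY := by rw [YY_eq]; exact measurableSet_closedBall

lemma YY_vol : ∃ V : ℝ, 0 < V ∧ volume YY = ENNReal.ofReal V := by
  rw [YY_eq]
  have h1 : volume (Metric.closedBall (0 : Sp) (1 / 8)) ≠ ⊤ := (isCompact_closedBall _ _).measure_lt_top.ne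
  have h2 : 0 < volume (Metric.closedBall (0 : Sp) (1 / 8)) := Metric.measure_closedBall_pos _ _ (by norm_num)
  exact ⟨_, ENNReal.toReal_pos h2.ne' h1, (ENNReal.ofReal_toReal h1).symm⟩

lemma gam_zero (c : ℝ) (e y : Sp) (he : e 0 ^ 2 + e 1 ^ 2 + e 2 ^ 2 = 1) :
    gam c e 0 y = fun i => (1 + c) * e i := by
  ext i
  simp [gam, qv, Nv, he]

lemma pointwise (c : ℝ) {e y : Sp} (he : e 0 ^ 2 + e 1 ^ 2 + e 2 ^ 2 = 1) (hy : y ∈ YY)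
    {w : Sp → ℝ} (hw : SC w) :
    ENNReal.ofReal |w (fun i => (1 + c) * e i)| ≤ ENNReal.ofReal (61 * GG w (gam c e 1 y)) +
      ∫⁻ s in Set.Ioc (0:ℝ) 1, ENNReal.ofReal (s * (10000 * GG w (gam c e s y))) := by
  have g : ∀ s ∈ Set.Icc (0:ℝ) 1, Good e y s := fun s hs => ⟨he, hy, hs.1, hs.2⟩
  have hG : ∀ p, 0 ≤ GG w p := fun p => (abs_nonneg _).trans (GG_0 w p)
  have hd : ∀ s ∈ Set.Icc (0:ℝ) 1, HasDerivAt (fun s => w (gam c e s y) - s * DD c e y w s)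
      (- (s * DD2 c e y w s)) s := by
    intro s hs
    have h1 := hasDerivAt_comp c e y s (g s hs).q_pos w hw.diff
    have h2 := (hasDerivAt_id s).mul (hasDerivAt_DD c (g s hs) hw)
    refine HasDerivAt.congr_deriv (h1.sub h2) ?_
    simp only [DD, id]
    ring
  have hcg : ContinuousOn (fun s => s * (10000 * GG w (gam c e s y))) (Set.Icc 0 1) := by
    refine continuousOn_id.mul (continuousOn_const.mul ?_)
    intro s hs
    exact ((GG_cont hw).continuousAt.comp (hasDerivAt_gam c e y s (g s hs).q_pos).continuousAt).continuousWithinAt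
  have hint : IntegrableOn (fun s => s * (10000 * GG w (gam c e s y))) (Set.Icc 0 1) := hcg.integrableOn_Icc
  have hb : ∀ s ∈ Set.Icc (0:ℝ) 1, |s * DD2 c e y w s| ≤ s * (10000 * GG w (gam c e s y)) := by
    intro s hs
    rw [abs_mul, abs_of_nonneg hs.1]
    exact mul_le_mul_of_nonneg_left (DD2_bound c (g s hs) hw) hs.1
  have u1 := intervalIntegral.sub_le_integral_of_hasDeriv_right_of_le (zero_le_one' ℝ)
    (fun s hs => (hd s hs).continuousAt.continuousWithinAt)
    (fun s hs => (hd s (Set.Ioo_subset_Icc_self hs)).hasDerivWithinAt) hint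
    (fun s hs => (neg_le_abs _).trans (hb s (Set.Ioo_subset_Icc_self hs)))
  have u2 := intervalIntegral.sub_le_integral_of_hasDeriv_right_of_le (zero_le_one' ℝ)
    (fun s hs => (hd s hs).neg.continuousAt.continuousWithinAt)
    (fun s hs => (hd s (Set.Ioo_subset_Icc_self hs)).neg.hasDerivWithinAt) hint
    (fun s hs => by rw [neg_neg]; exact (le_abs_self _).trans (hb s (Set.Ioo_subset_Icc_self hs)))
  simp only [Pi.neg_apply] at u2
  have hone := g 1 (by simp)
  have b1 := GG_0 w (gam c e 1 y)
  have b2 := DD_bound c hone (w := w) (fun k => GG_p w _ k) (fun k => GG_r w _ k)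
  have fin : |w (gam c e 0 y)| ≤ 61 * GG w (gam c e 1 y) + ∫ s in (0:ℝ)..1, s * (10000 * GG w (gam c e s y)) := by
    rw [abs_le] at *
    constructor <;> linarith [b1.1, b1.2, b2.1, b2.2]
  rw [gam_zero c e y he] at fin
  have hnn : ∀ᵐ s ∂(volume.restrict (Set.Ioc (0:ℝ) 1)), 0 ≤ s * (10000 * GG w (gam c e s y)) := by
    filter_upwards [ae_restrict_mem measurableSet_Ioc] with s hs
    have := hG (gam c e s y)
    have := hs.1
    positivity
  rw [← ofReal_integral_eq_lintegral_ofReal (hint.mono_set Set.Ioc_subset_Icc_self) hnn,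
    ← intervalIntegral.integral_of_le zero_le_one, ← ENNReal.ofReal_add (by have := hG (gam c e 1 y); positivity)]
  · exact ENNReal.ofReal_le_ofReal fin
  · rw [intervalIntegral.integral_of_le zero_le_one]
    exact integral_nonneg_of_ae hnn

lemma change_var {R : ℝ} (hR : 1 ≤ R) {e : Sp} (he : e 0 ^ 2 + e 1 ^ 2 + e 2 ^ 2 = 1) {s : ℝ}
    (hs : s ∈ Set.Ioc (0:ℝ) 1) (g : Sp → ENNReal) :
    ∫⁻ y in YY, g (gam (R - 1) e s y) ≤ ENNReal.ofReal (4 / (R ^ 2 * s ^ 3)) * ∫⁻ p, g p := by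
  have gd : ∀ y ∈ YY, Good e y s := fun y hy => ⟨he, hy, hs.1.le, hs.2⟩
  have hs0 := hs.1
  have R0 : 0 < R := by linarith
  have hcv := lintegral_image_eq_lintegral_abs_det_fderiv_mul volume YY_meas
    (fun y hy => (gam_hasFDerivAt (R - 1) e s y (gd y hy).q_pos).hasFDerivWithinAt)
    ((gam_injOn (R - 1) (by linarith) e s hs.1.ne').mono (fun y hy => (gd y hy).q_pos)) g
  have h1 : ∫⁻ y in YY, ENNReal.ofReal (R ^ 2 * s ^ 3 / 4) * g (gam (R - 1) e s y) ≤ ∫⁻ p, g p := by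
    refine le_trans ?_ (setLIntegral_le_lintegral (gam (R - 1) e s '' YY) g)
    rw [hcv]
    refine setLIntegral_mono' YY_meas fun y hy => ?_
    gcongr
    refine le_trans ?_ (le_abs_self _)
    rw [gamL_det _ _ _ _ (gd y hy).q_pos]
    have hq0 : 0 < √(qv e s y) := Real.sqrt_pos.2 (gd y hy).q_pos
    have hq : √(qv e s y) ≤ 2 := by
      rw [Real.sqrt_le_left (by norm_num)]
      linarith [(gd y hy).q_le]
    have hd : R / 2 ≤ 1 + (R - 1) / √(qv e s y) := by
      have : (R - 1) / 2 ≤ (R - 1) / √(qv e s y) := div_le_div_of_nonneg_left (by linarith) hq0 hq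
      linarith
    calc R ^ 2 * s ^ 3 / 4 = s ^ 3 * (R / 2) ^ 2 := by ring
      _ ≤ _ := by gcongr
  rw [lintegral_const_mul' _ _ ENNReal.ofReal_ne_top] at h1
  have h2 : ENNReal.ofReal (4 / (R ^ 2 * s ^ 3)) * ENNReal.ofReal (R ^ 2 * s ^ 3 / 4) = 1 := by
    rw [← ENNReal.ofReal_mul (by positivity)]
    rw [show 4 / (R ^ 2 * s ^ 3) * (R ^ 2 * s ^ 3 / 4) = 1 by field_simp]
    simp
  calc _ = ENNReal.ofReal (4 / (R ^ 2 * s ^ 3)) * (ENNReal.ofReal (R ^ 2 * s ^ 3 / 4) * ∫⁻ y in YY, g (gam (R - 1) e s y)) := by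
        rw [← mul_assoc, h2, one_mul]
    _ ≤ _ := by gcongr

lemma rpow_J : ∃ j : ℝ, 0 ≤ j ∧ ∫⁻ s in Set.Ioc (0:ℝ) 1, ENNReal.ofReal (s ^ (-(1/2) : ℝ)) = ENNReal.ofReal j := by
  have h := (intervalIntegral.intervalIntegrable_rpow' (a := 0) (b := 1) (r := -(1/2)) (by norm_num)).1
  have hnn : ∀ᵐ s ∂(volume.restrict (Set.Ioc (0:ℝ) 1)), 0 ≤ s ^ (-(1/2) : ℝ) := by
    filter_upwards [ae_restrict_mem measurableSet_Ioc] with s hs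
    exact Real.rpow_nonneg hs.1.le _
  exact ⟨_, integral_nonneg_of_ae hnn, (ofReal_integral_eq_lintegral_ofReal h hnn).symm⟩

lemma amgm {A s G : ℝ} (hA : 0 < A) (hs : 0 < s) :
    s * (10000 * G) ≤ 5000 * A * (s ^ 3 * s ^ (-(1/2) : ℝ)) * G ^ 2 + 5000 / A * s ^ (-(1/2) : ℝ) := by
  have hk : 0 < s ^ (-(1/2) : ℝ) := Real.rpow_pos_of_pos hs _
  have hk2 : s * (s ^ (-(1/2) : ℝ)) ^ 2 = 1 := by
    rw [← Real.rpow_natCast, ← Real.rpow_mul hs.le]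
    norm_num
    rw [Real.rpow_neg_one]
    field_simp
  set k := s ^ (-(1/2) : ℝ)
  have : 5000 * A * (s ^ 3 * k) * G ^ 2 + 5000 / A * k - s * (10000 * G) = 5000 * k / A * (A * s ^ 2 * k * G - 1) ^ 2 := by
    have hs' : s = (k ^ 2)⁻¹ := by field_simp; linarith
    rw [hs']
    field_simp
    ring
  have h2 : 0 ≤ 5000 * k / A * (A * s ^ 2 * k * G - 1) ^ 2 := by positivity
  linarith

def SS (w : Sp → ℝ) : ℝ :=
  ∑ m ∈ Finset.range 3, ∑ n ∈ Finset.range (3 - m),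
    ∑ α : Fin m → Fin 3, ∑ β : Fin n → Fin 3,
      (∫ x : Sp, (Rot3Comp α (Pd3Comp β w) x) ^ 2) ^ ((1:ℝ)/2)

lemma SS_nonneg (w) : 0 ≤ SS w := by
  refine Finset.sum_nonneg fun _ _ => Finset.sum_nonneg fun _ _ => Finset.sum_nonneg fun _ _ =>
    Finset.sum_nonneg fun _ _ => Real.rpow_nonneg (integral_nonneg fun _ => sq_nonneg _) _

lemma SC.eLp {w : Sp → ℝ} (h : SC w) :
    eLpNorm (fun x => |w x|) 2 volume = ENNReal.ofReal ((∫ x, w x ^ 2) ^ ((1:ℝ)/2)) := by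
  have hm : MemLp w 2 volume := h.cont.memLp_of_hasCompactSupport h.2
  have := hm.eLpNorm_eq_integral_rpow_norm (by norm_num) (by norm_num)
  have e : eLpNorm (fun x => |w x|) 2 volume = eLpNorm w 2 volume := eLpNorm_norm w
  rw [e, this]
  norm_num

lemma eLp_GG {w : Sp → ℝ} (h : SC w) : eLpNorm (GG w) 2 volume ≤ ENNReal.ofReal (SS w) := by
  have hnn : ∀ (m n : ℕ) (α : Fin m → Fin 3) (β : Fin n → Fin 3),
      0 ≤ (∫ x : Sp, (Rot3Comp α (Pd3Comp β w) x) ^ 2) ^ ((1:ℝ)/2) := fun _ _ _ _ =>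
    Real.rpow_nonneg (integral_nonneg fun _ => sq_nonneg _) _
  have hc : ∀ (m n : ℕ) (α : Fin m → Fin 3) (β : Fin n → Fin 3),
      Continuous (fun x => |Rot3Comp α (Pd3Comp β w) x|) := fun _ _ α β =>
    ((h.pdComp β).rotComp α).cont.abs
  have e : GG w = ∑ m ∈ Finset.range 3, ∑ n ∈ Finset.range (3 - m),
    ∑ α : Fin m → Fin 3, ∑ β : Fin n → Fin 3, fun p => |Rot3Comp α (Pd3Comp β w) p| := by
    ext p
    simp only [GG, Finset.sum_apply]
  rw [e, SS]
  rw [ENNReal.ofReal_sum_of_nonneg (fun _ _ => Finset.sum_nonneg fun _ _ => Finset.sum_nonneg fun _ _ => Finset.sum_nonneg fun _ _ => hnn _ _ _ _)]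
  refine (eLpNorm_sum_le (fun m _ => ?_) (by norm_num)).trans (Finset.sum_le_sum fun m _ => ?_)
  · refine Continuous.aestronglyMeasurable ?_
    simp only [Finset.sum_fn]
    exact continuous_finsetSum _ fun n _ => continuous_finsetSum _ fun α _ => continuous_finsetSum _ fun β _ => hc _ _ _ _
  rw [ENNReal.ofReal_sum_of_nonneg (fun _ _ => Finset.sum_nonneg fun _ _ => Finset.sum_nonneg fun _ _ => hnn _ _ _ _)]
  refine (eLpNorm_sum_le (fun m _ => ?_) (by norm_num)).trans (Finset.sum_le_sum fun n _ => ?_)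
  · refine Continuous.aestronglyMeasurable ?_
    simp only [Finset.sum_fn]
    exact continuous_finsetSum _ fun α _ => continuous_finsetSum _ fun β _ => hc _ _ _ _
  rw [ENNReal.ofReal_sum_of_nonneg (fun _ _ => Finset.sum_nonneg fun _ _ => hnn _ _ _ _)]
  refine (eLpNorm_sum_le (fun m _ => ?_) (by norm_num)).trans (Finset.sum_le_sum fun α _ => ?_)
  · refine Continuous.aestronglyMeasurable ?_
    simp only [Finset.sum_fn]
    exact continuous_finsetSum _ fun β _ => hc _ _ _ _
  rw [ENNReal.ofReal_sum_of_nonneg (fun _ _ => hnn _ _ _ _)]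
  refine (eLpNorm_sum_le (fun m _ => ?_) (by norm_num)).trans (Finset.sum_le_sum fun β _ => ?_)
  · exact (hc _ _ _ _).aestronglyMeasurable
  exact ((h.pdComp β).rotComp α).eLp.le

lemma lint_GG {w : Sp → ℝ} (h : SC w) :
    ∫⁻ p, ENNReal.ofReal (GG w p ^ 2) ≤ ENNReal.ofReal (SS w ^ 2) := by
  have h1 := eLp_GG h
  have h2 := eLpNorm_nnreal_pow_eq_lintegral (μ := (volume : Measure Sp)) (f := GG w) (p := 2) (by norm_num)
  have h3 : ∫⁻ p, ENNReal.ofReal (GG w p ^ 2) = eLpNorm (GG w) 2 volume ^ 2 := by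
    have : eLpNorm (GG w) 2 volume ^ (2 : ℝ) = ∫⁻ x, ‖GG w x‖ₑ ^ (2 : ℝ) := by simpa using h2
    rw [← ENNReal.rpow_natCast]
    push_cast
    rw [this]
    refine lintegral_congr fun p => ?_
    rw [← ofReal_norm, ENNReal.ofReal_rpow_of_nonneg (norm_nonneg _) (by norm_num)]
    simp
  rw [h3, ENNReal.ofReal_pow (SS_nonneg w)]
  gcongr

lemma inner_bd {w : Sp → ℝ} (h : SC w) {R M A V : ℝ} (hR : 1 ≤ R) (hM : SS w ≤ M) (hA : 0 < A)
    (hV : 0 < V) (hV' : volume YY = ENNReal.ofReal V)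
    {e : Sp} (he : e 0 ^ 2 + e 1 ^ 2 + e 2 ^ 2 = 1) {s : ℝ} (hs : s ∈ Set.Ioc (0:ℝ) 1) :
    ∫⁻ y in YY, ENNReal.ofReal (s * (10000 * GG w (gam (R - 1) e s y))) ≤
      ENNReal.ofReal (20000 * A * M ^ 2 / R ^ 2 + 5000 * V / A) * ENNReal.ofReal (s ^ (-(1/2) : ℝ)) := by
  have hs0 := hs.1
  have R0 : 0 < R := by linarith
  have hk : 0 < s ^ (-(1/2) : ℝ) := Real.rpow_pos_of_pos hs0 _
  have hE : ∫⁻ p, ENNReal.ofReal (GG w p ^ 2) ≤ ENNReal.ofReal (M ^ 2) :=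
    (lint_GG h).trans (ENNReal.ofReal_le_ofReal (pow_le_pow_left₀ (SS_nonneg w) hM 2))
  have h1 := change_var hR he hs (fun p => ENNReal.ofReal (GG w p ^ 2))
  have h2 : ∀ y, ENNReal.ofReal (s * (10000 * GG w (gam (R - 1) e s y))) ≤
      ENNReal.ofReal (5000 * A * (s ^ 3 * s ^ (-(1/2) : ℝ))) * ENNReal.ofReal (GG w (gam (R - 1) e s y) ^ 2)
      + ENNReal.ofReal (5000 / A * s ^ (-(1/2) : ℝ)) := by
    intro y
    rw [← ENNReal.ofReal_mul (by positivity), ← ENNReal.ofReal_add (by positivity) (by positivity)]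
    exact ENNReal.ofReal_le_ofReal (amgm hA hs0)
  refine (lintegral_mono h2).trans ?_
  rw [lintegral_add_right _ measurable_const, lintegral_const_mul' _ _ ENNReal.ofReal_ne_top, setLIntegral_const, hV']
  refine (add_le_add_left (mul_le_mul_right (h1.trans (mul_le_mul_right hE _)) _) _).trans ?_
  rw [← ENNReal.ofReal_mul (by positivity), ← ENNReal.ofReal_mul (by positivity), ← ENNReal.ofReal_mul (by positivity),
    ← ENNReal.ofReal_mul (by positivity), ← ENNReal.ofReal_add (by positivity) (by positivity)]
  refine ENNReal.ofReal_le_ofReal (le_of_eq ?_)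
  generalize s ^ (-(1/2) : ℝ) = k at *
  field_simp
  ring

lemma gam_meas (c : ℝ) (e : Sp) : Measurable (fun z : Sp × ℝ => gam c e z.2 z.1) := by
  unfold gam qv Nv
  refine measurable_pi_lambda _ fun i => ?_
  fun_prop

lemma main_bd1 {H : ℝ → Sp → ℝ} {Y : Set Sp} (hY : MeasurableSet Y) {W V j κ : ℝ} (hW : 0 ≤ W) (hκ0 : 0 ≤ κ)
    (hV' : volume Y = ENNReal.ofReal V)
    (hj : 0 ≤ j) (hj' : ∫⁻ s in Set.Ioc (0:ℝ) 1, ENNReal.ofReal (s ^ (-(1/2) : ℝ)) = ENNReal.ofReal j)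
    (hm2 : Measurable (fun z : Sp × ℝ => ENNReal.ofReal (H z.2 z.1)))
    (hp : ∀ y ∈ Y, ENNReal.ofReal W ≤ ENNReal.ofReal (H 1 y) +
      ∫⁻ s in Set.Ioc (0:ℝ) 1, ENNReal.ofReal (H s y))
    (hin : ∀ s ∈ Set.Ioc (0:ℝ) 1, ∫⁻ y in Y, ENNReal.ofReal (H s y) ≤
      ENNReal.ofReal κ * ENNReal.ofReal (s ^ (-(1/2) : ℝ))) :
    W * V ≤ κ + κ * j := by
  have hm1 : Measurable (fun y : Sp => ENNReal.ofReal (H 1 y)) :=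
    hm2.comp (measurable_id.prodMk measurable_const)
  have h1 : ENNReal.ofReal W * ENNReal.ofReal V ≤
      ENNReal.ofReal κ + ENNReal.ofReal κ * ENNReal.ofReal j := by
    rw [← hV', ← setLIntegral_const]
    refine (setLIntegral_mono' hY hp).trans ?_
    rw [lintegral_add_left hm1]
    refine add_le_add ?_ ?_
    · have := hin 1 (Set.mem_Ioc.2 ⟨one_pos, le_rfl⟩)
      rwa [Real.one_rpow, ENNReal.ofReal_one, mul_one] at this
    · rw [lintegral_lintegral_swap hm2.aemeasurable]
      rw [← hj', ← lintegral_const_mul' _ _ ENNReal.ofReal_ne_top]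
      exact setLIntegral_mono' measurableSet_Ioc hin
  rwa [← ENNReal.ofReal_mul hW, ← ENNReal.ofReal_mul hκ0,
    ← ENNReal.ofReal_add hκ0 (mul_nonneg hκ0 hj),
    ENNReal.ofReal_le_ofReal_iff (add_nonneg hκ0 (mul_nonneg hκ0 hj))] at h1

lemma main_p {w : Sp → ℝ} (h : SC w) {R : ℝ} {e : Sp} (he : e 0 ^ 2 + e 1 ^ 2 + e 2 ^ 2 = 1) :
    ∀ y ∈ YY, ENNReal.ofReal |w (fun i => R * e i)| ≤
      ENNReal.ofReal (1 * (10000 * GG w (gam (R - 1) e 1 y))) +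
      ∫⁻ s in Set.Ioc (0:ℝ) 1, ENNReal.ofReal (s * (10000 * GG w (gam (R - 1) e s y))) := by
  intro y hy
  have := pointwise (R - 1) he hy h
  rw [show 1 + (R - 1) = R by ring] at this
  refine this.trans (add_le_add_left (ENNReal.ofReal_le_ofReal ?_) _)
  have hG : 0 ≤ GG w (gam (R - 1) e 1 y) := (abs_nonneg _).trans (GG_0 w _)
  generalize GG w (gam (R - 1) e 1 y) = G at *
  linarith

lemma main_m {w : Sp → ℝ} (h : SC w) {R : ℝ} {e : Sp} :
    Measurable (fun z : Sp × ℝ => ENNReal.ofReal (z.2 * (10000 * GG w (gam (R - 1) e z.2 z.1)))) := by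
  have hGm : Measurable (fun z : Sp × ℝ => GG w (gam (R - 1) e z.2 z.1)) :=
    (GG_cont h).measurable.comp (gam_meas (R - 1) e)
  exact (measurable_snd.mul (hGm.const_mul _)).ennreal_ofReal

lemma alg1 {R M V j W : ℝ} (R0 : 0 < R) (hM0 : 0 < M) (hV : 0 < V)
    (h1 : W * V ≤ (20000 * (R / M) * M ^ 2 / R ^ 2 + 5000 * V / (R / M)) +
      (20000 * (R / M) * M ^ 2 / R ^ 2 + 5000 * V / (R / M)) * j) :
    R * W ≤ (20000 + 5000 * V) * (1 + j) / V * M := by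
  have h3 : W * V * R ≤ (20000 + 5000 * V) * M * (1 + j) := by
    have := mul_le_mul_of_nonneg_right h1 R0.le
    refine this.trans (le_of_eq ?_)
    field_simp
  calc R * W = W * V * R / V := by field_simp
    _ ≤ (20000 + 5000 * V) * M * (1 + j) / V := div_le_div_of_nonneg_right h3 hV.le
    _ = _ := by ring

lemma main_bd {w : Sp → ℝ} (h : SC w) {R M V j : ℝ} (hR : 1 ≤ R) (hM : SS w ≤ M) (hM0 : 0 < M)
    (hV : 0 < V) (hV' : volume YY = ENNReal.ofReal V)
    (hj : 0 ≤ j) (hj' : ∫⁻ s in Set.Ioc (0:ℝ) 1, ENNReal.ofReal (s ^ (-(1/2) : ℝ)) = ENNReal.ofReal j)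
    {e : Sp} (he : e 0 ^ 2 + e 1 ^ 2 + e 2 ^ 2 = 1) :
    R * |w (fun i => R * e i)| ≤ (20000 + 5000 * V) * (1 + j) / V * M := by
  have R0 : 0 < R := by linarith
  have hA : 0 < R / M := by positivity
  have hκ : 0 ≤ 20000 * (R / M) * M ^ 2 / R ^ 2 + 5000 * V / (R / M) := by positivity
  exact alg1 R0 hM0 hV (main_bd1 (H := fun s y => s * (10000 * GG w (gam (R - 1) e s y)))
    YY_meas (abs_nonneg _) hκ hV' hj hj' (main_m h) (main_p h he) fun s hs => inner_bd h hR hM hA hV hV' he hs)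

lemma sobolev : ∃ C : ℝ, 0 < C ∧ ∀ w : Sp → ℝ, SC w → ∀ x, 1 ≤ rad x → rad x * |w x| ≤ C * SS w := by
  obtain ⟨V, hV, hV'⟩ := YY_vol
  obtain ⟨j, hj, hj'⟩ := rpow_J
  refine ⟨(20000 + 5000 * V) * (1 + j) / V, by positivity, fun w hw x hx => ?_⟩
  have R0 : 0 < rad x := by linarith
  have hr : rad x ^ 2 = x 0 ^ 2 + x 1 ^ 2 + x 2 ^ 2 := by
    rw [rad, Real.sq_sqrt (by positivity), Fin.sum_univ_three]
  have key : ∀ δ > 0, rad x * |w x| ≤ (20000 + 5000 * V) * (1 + j) / V * (SS w + δ) := by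
    intro δ hδ
    have := main_bd hw (M := SS w + δ) hx (by linarith) (by linarith [SS_nonneg w]) hV hV' hj hj'
      (e := fun i => x i / rad x) (by field_simp; linarith)
    rwa [show (fun i => rad x * (x i / rad x)) = x by ext i; field_simp] at this
  have hC : 0 < (20000 + 5000 * V) * (1 + j) / V := by positivity
  refine le_of_forall_pos_le_add fun ε hε => ?_
  have := key (ε / ((20000 + 5000 * V) * (1 + j) / V)) (by positivity)
  rwa [mul_add, mul_div_cancel₀ _ hC.ne'] at this

lemma SC.slice {v : Pt → ℝ} (h : ContDiff ℝ (⊤ : ℕ∞) v) (h' : HasCompactSupport v) (t : ℝ) :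
    SC (fun x : Sp => v (Fin.cons t x)) := by
  refine ⟨h.comp ?_, ?_⟩
  · rw [contDiff_pi]
    intro i
    refine Fin.cases ?_ (fun i => ?_) i
    · simpa using contDiff_const
    · simpa using contDiff_apply ℝ ℝ i
  · refine HasCompactSupport.intro (K := (fun p : Pt => (fun i => p (Fin.succ i) : Sp)) '' tsupport v)
      (h'.isCompact.image (by fun_prop)) fun x hx => ?_
    by_contra hne
    exact hx ⟨Fin.cons t x, subset_tsupport _ hne, by ext i; simp⟩

lemma SC.sup {w : Sp → ℝ} (h : SC w) (x : Sp) : |w x| ≤ (eLpNorm w ⊤ volume).toReal := by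
  have hfin : eLpNorm w ⊤ volume ≠ ⊤ := (h.cont.memLp_of_hasCompactSupport h.2 (p := ⊤)).2.ne
  have hae : ∀ᵐ x ∂(volume : Measure Sp), ‖w x‖ₑ ≤ eLpNorm w ⊤ volume := by
    rw [eLpNorm_exponent_top]; exact enorm_ae_le_eLpNormEssSup w volume
  have hae' : ∀ᵐ x ∂(volume : Measure Sp), |w x| ≤ (eLpNorm w ⊤ volume).toReal := by
    filter_upwards [hae] with x hx
    have := ENNReal.toReal_mono hfin hx
    simpa using this
  have hd := Measure.dense_of_ae hae'
  have hcl : IsClosed {x | |w x| ≤ (eLpNorm w ⊤ volume).toReal} := isClosed_le h.cont.abs continuous_const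
  have := hcl.closure_eq ▸ hd.closure_eq
  exact (this ▸ Set.mem_univ x : x ∈ {x | |w x| ≤ (eLpNorm w ⊤ volume).toReal})

lemma jb_pos (z : ℝ) : 1 ≤ jb z := by
  rw [jb, Real.one_le_sqrt]; nlinarith [sq_nonneg z]

lemma jb_add {t r : ℝ} (hr : 0 ≤ r) : jb (t + r) ≤ jb t + r := by
  have h1 := jb_pos t
  have h2 : jb t ^ 2 = 1 + t ^ 2 := Real.sq_sqrt (by positivity)
  have h3 : t ≤ jb t := by
    by_contra hh
    nlinarith
  rw [jb, Real.sqrt_le_left (by linarith)]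
  nlinarith
set_option maxHeartbeats 1000000 in
/-- Lemma 3.5 of the paper.  For `u,v ∈ C₀^∞(ℝ×ℝ³)` and `t ≥ 0`,
`‖⟨t+r⟩u(t,·)v(t,·)‖₂ ≤ C‖u(t,·)‖₂·⟨t⟩‖v(t,·)‖_∞
  + C‖u(t,·)‖₂·Σ_{|α|+|β|≤2}‖Ω^α∂_x^β v(t,·)‖₂`. -/
theorem stmt_18 :
    ∃ C : ℝ, 0 < C ∧
      ∀ (u v : Pt → ℝ), ContDiff ℝ (⊤ : ℕ∞) u → HasCompactSupport u →
        ContDiff ℝ (⊤ : ℕ∞) v → HasCompactSupport v →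
        ∀ t : ℝ, 0 ≤ t →
          (∫ x : Sp, jb (t + rad x) ^ 2 *
              (u (Fin.cons t x)) ^ 2 * (v (Fin.cons t x)) ^ 2) ^ ((1:ℝ)/2)
            ≤ C * (∫ x : Sp, (u (Fin.cons t x)) ^ 2) ^ ((1:ℝ)/2) * (jb t *
                  (eLpNorm (fun x : Sp => v (Fin.cons t x)) ⊤ volume).toReal)
              + C * (∫ x : Sp, (u (Fin.cons t x)) ^ 2) ^ ((1:ℝ)/2) *
                  ∑ m ∈ Finset.range 3, ∑ n ∈ Finset.range (3 - m),
                    ∑ α : Fin m → Fin 3, ∑ β : Fin n → Fin 3,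
                      (∫ x : Sp, (Rot3Comp α (Pd3Comp β
                        (fun y : Sp => v (Fin.cons t y))) x) ^ 2) ^ ((1:ℝ)/2) := by

  obtain ⟨C, hC, hS⟩ := sobolev
  refine ⟨C + 2, by positivity, fun u v hu hu' hv hv' t ht => ?_⟩
  have su := SC.slice hu hu' t
  have sv := SC.slice hv hv' t
  change _ ≤ (C + 2) * (∫ x : Sp, (u (Fin.cons t x)) ^ 2) ^ ((1:ℝ)/2) * (jb t *
                  (eLpNorm (fun x : Sp => v (Fin.cons t x)) ⊤ volume).toReal)
              + (C + 2) * (∫ x : Sp, (u (Fin.cons t x)) ^ 2) ^ ((1:ℝ)/2) * SS (fun x => v (Fin.cons t x))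
  set f : Sp → ℝ := fun x => v (Fin.cons t x) with hf
  set U : Sp → ℝ := fun x => u (Fin.cons t x) with hU
  set M := (eLpNorm f ⊤ volume).toReal with hM
  have hM0 : 0 ≤ M := ENNReal.toReal_nonneg
  have hS0 := SS_nonneg f
  have hj := jb_pos t
  set B := (C + 2) * (jb t * M + SS f) with hB
  have hB0 : 0 ≤ B := by positivity
  have pw : ∀ x, jb (t + rad x) * |f x| ≤ B := by
    intro x
    have hr : 0 ≤ rad x := Real.sqrt_nonneg _
    have h1 : jb (t + rad x) * |f x| ≤ jb t * |f x| + rad x * |f x| := by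
      rw [← add_mul]
      exact mul_le_mul_of_nonneg_right (jb_add hr) (abs_nonneg _)
    have h2 : |f x| ≤ M := sv.sup x
    have h3 : jb t * |f x| ≤ jb t * M := mul_le_mul_of_nonneg_left h2 (by linarith)
    have h6 : 0 ≤ C * (jb t * M) := by positivity
    rcases le_total 1 (rad x) with h | h
    · have h4 := hS f sv x h
      have : 0 ≤ jb t * M := by positivity
      rw [hB]
      linarith
    · have h4 : rad x * |f x| ≤ 1 * M := mul_le_mul h h2 (abs_nonneg _) zero_le_one
      have h5 : 1 * M ≤ jb t * M := mul_le_mul_of_nonneg_right hj hM0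
      have h7 : 0 ≤ C * SS f := by positivity
      rw [hB]
      linarith
  have hint : Integrable (fun x => U x ^ 2) := by
    refine (su.cont.pow 2).integrable_of_hasCompactSupport ?_
    exact su.2.comp_left (g := fun z : ℝ => z ^ 2) (by norm_num)
  have hI : ∫ x : Sp, jb (t + rad x) ^ 2 * U x ^ 2 * f x ^ 2 ≤ B ^ 2 * ∫ x, U x ^ 2 := by
    rw [← integral_const_mul]
    refine integral_mono_of_nonneg (Filter.Eventually.of_forall fun x => by positivity)
      (hint.const_mul _) (Filter.Eventually.of_forall fun x => ?_)
    have h1 : (jb (t + rad x) * |f x|) ^ 2 ≤ B ^ 2 :=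
      pow_le_pow_left₀ (mul_nonneg (by linarith [jb_pos (t + rad x)]) (abs_nonneg _)) (pw x) 2
    rw [mul_pow, sq_abs] at h1
    have := mul_le_mul_of_nonneg_right h1 (sq_nonneg (U x))
    dsimp only
    linarith
  have hI0 : 0 ≤ ∫ x, U x ^ 2 := integral_nonneg fun _ => sq_nonneg _
  have hfin := Real.rpow_le_rpow (integral_nonneg fun _ => by positivity) hI (show (0:ℝ) ≤ 1 / 2 by norm_num)
  rw [Real.mul_rpow (sq_nonneg _) hI0, ← Real.sqrt_eq_rpow (B ^ 2), Real.sqrt_sq hB0] at hfin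
  refine hfin.trans (le_of_eq ?_)
  rw [hB]
  ring
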